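/- Let N be a positive integer, δ₀ ∈ (0,1), 0 < s < t < 1 with t − s ≥ δ₀, and m > 0. There exist r₀ > 0, depending only on m, N and δ₀, and c₀ > 0, depending only on N and δ₀, such that: if F is a minimizer for φ(m) and x₀ ∈ ∂^m F, then |B(x₀, r) ∩ F| ≥ c₀·r^N for all r ∈ (0, r₀). -/

import Mathlib

open MeasureTheory ENNReal

/-- Interaction energy `∫_A ∫_B |x-y|^{-(N+α)} dy dx` in `[0,∞]`. -/
noncomputable def interEnergy (N : ℕ) (α : ℝ)
    (A B : Set (EuclideanSpace ℝ (Fin N))) : ℝ≥0∞ :=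
  ∫⁻ x in A, ∫⁻ y in B, ENNReal.ofReal (‖x - y‖ ^ (-((N : ℝ) + α))) ∂volume ∂volume

/-- The fractional `α`-perimeter `P_α(E) = ∫_E ∫_{Eᶜ} |x-y|^{-(N+α)} dy dx`. -/
noncomputable def fracPer (N : ℕ) (α : ℝ) (E : Set (EuclideanSpace ℝ (Fin N))) : ℝ≥0∞ :=
  interEnergy N α E Eᶜ

/-- The free energy `F_{s,t}(E) = (1-t) P_t(E) - s P_s(E)`. -/
noncomputable def freeEnergy (N : ℕ) (s t : ℝ) (E : Set (EuclideanSpace ℝ (Fin N))) : ℝ :=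
  (1 - t) * (fracPer N t E).toReal - s * (fracPer N s E).toReal

/-- The isovolumetric function `φ(m) = inf { F_{s,t}(E) : |E| = m, P_t(E) < ∞ }`. -/
noncomputable def isoFn (N : ℕ) (s t m : ℝ) : ℝ :=
  sInf {x : ℝ | ∃ E : Set (EuclideanSpace ℝ (Fin N)), MeasurableSet E ∧
    volume E = ENNReal.ofReal m ∧ fracPer N t E < ⊤ ∧ x = freeEnergy N s t E}


/-- `F` is a minimizer of the free energy `F_{s,t}` among measurable sets of volume `m`
with finite `t`-perimeter. -/
def IsMinimizer (N : ℕ) (s t m : ℝ) (F : Set (EuclideanSpace ℝ (Fin N))) : Prop :=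
  MeasurableSet F ∧ volume F = ENNReal.ofReal m ∧ fracPer N t F < ⊤ ∧
    ∀ E : Set (EuclideanSpace ℝ (Fin N)), MeasurableSet E →
      volume E = ENNReal.ofReal m → fracPer N t E < ⊤ →
      freeEnergy N s t F ≤ freeEnergy N s t E

/-- The measure-theoretic boundary of a set. -/
def mtBoundary (N : ℕ) (E : Set (EuclideanSpace ℝ (Fin N))) :
    Set (EuclideanSpace ℝ (Fin N)) :=
  {x | ∀ r : ℝ, 0 < r →
    0 < volume (E ∩ Metric.ball x r) ∧ 0 < volume (Metric.ball x r \ E)}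


noncomputable def krn (N : ℕ) (α : ℝ) (h : EuclideanSpace ℝ (Fin N)) : ℝ≥0∞ :=
  ENNReal.ofReal (‖h‖ ^ (-((N : ℝ) + α)))

noncomputable def DD (N : ℕ) (A : Set (EuclideanSpace ℝ (Fin N)))
    (h : EuclideanSpace ℝ (Fin N)) : ℝ≥0∞ :=
  volume (A ∩ (fun x => x + h) ⁻¹' Aᶜ)

def shl (N : ℕ) (R : ℝ) : Set (EuclideanSpace ℝ (Fin N)) := {h | R / 2 ≤ ‖h‖ ∧ ‖h‖ < R}

lemma krn_meas (N : ℕ) (α : ℝ) : Measurable (krn N α) := by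
  unfold krn; fun_prop

lemma shl_meas (N : ℕ) (R : ℝ) : MeasurableSet (shl N R) := by
  unfold shl
  exact (measurableSet_le measurable_const measurable_norm).inter
    (measurableSet_lt measurable_norm measurable_const)

lemma DD_eq {N : ℕ} {A : Set (EuclideanSpace ℝ (Fin N))} (hA : MeasurableSet A)
    (h : EuclideanSpace ℝ (Fin N)) :
    DD N A h = ∫⁻ x in A, Aᶜ.indicator 1 (x + h) := by
  have h2 : MeasurableSet ((fun x => x + h) ⁻¹' Aᶜ) := hA.compl.preimage (by fun_prop)
  have : ∀ x, Aᶜ.indicator (1 : EuclideanSpace ℝ (Fin N) → ℝ≥0∞) (x + h)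
      = ((fun x => x + h) ⁻¹' Aᶜ).indicator 1 x := fun x => rfl
  simp_rw [this]
  rw [lintegral_indicator_one h2, Measure.restrict_apply h2, Set.inter_comm]; rfl

lemma ind_meas {N : ℕ} {A : Set (EuclideanSpace ℝ (Fin N))} (hA : MeasurableSet A) :
    Measurable (fun p : EuclideanSpace ℝ (Fin N) × EuclideanSpace ℝ (Fin N) =>
      Aᶜ.indicator (1 : EuclideanSpace ℝ (Fin N) → ℝ≥0∞) (p.2 + p.1)) := by
  have : Measurable (Aᶜ.indicator (1 : EuclideanSpace ℝ (Fin N) → ℝ≥0∞)) :=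
    measurable_one.indicator hA.compl
  exact this.comp (by fun_prop)

lemma DD_meas {N : ℕ} {A : Set (EuclideanSpace ℝ (Fin N))} (hA : MeasurableSet A) :
    Measurable (DD N A) := by
  have : DD N A = fun h => ∫⁻ x in A, Aᶜ.indicator 1 (x + h) := funext (DD_eq hA)
  rw [this]
  exact (ind_meas hA).lintegral_prod_right'

lemma fracPer_eq {N : ℕ} {A : Set (EuclideanSpace ℝ (Fin N))} (hA : MeasurableSet A) (α : ℝ) :
    fracPer N α A = ∫⁻ h, krn N α h * DD N A h := by
  have hi : Measurable (Aᶜ.indicator (1 : EuclideanSpace ℝ (Fin N) → ℝ≥0∞)) :=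
    measurable_one.indicator hA.compl
  unfold fracPer interEnergy
  have e1 : ∀ x : EuclideanSpace ℝ (Fin N),
      ∫⁻ y in Aᶜ, ENNReal.ofReal (‖x - y‖ ^ (-((N : ℝ) + α)))
      = ∫⁻ h, krn N α h * Aᶜ.indicator 1 (x + h) := by
    intro x
    rw [← lintegral_indicator hA.compl,
      ← lintegral_add_left_eq_self _ x]
    refine lintegral_congr fun h => ?_
    by_cases hh : x + h ∈ Aᶜ
    · simp [hh, krn]
    · simp [hh, krn]
  simp_rw [e1]
  rw [lintegral_lintegral_swap]
  · refine lintegral_congr fun h => ?_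
    rw [lintegral_const_mul _ (by exact hi.comp (by fun_prop)), DD_eq hA]
  · refine Measurable.aemeasurable ?_
    refine Measurable.mul ((krn_meas N α).comp measurable_snd) ?_
    exact hi.comp (by fun_prop)

lemma DD_two {N : ℕ} {A : Set (EuclideanSpace ℝ (Fin N))}
    (h : EuclideanSpace ℝ (Fin N)) : DD N A h ≤ 2 * DD N A ((2⁻¹ : ℝ) • h) := by
  set k := (2⁻¹ : ℝ) • h with hk
  have hh : h = k + k := by rw [hk, ← add_smul]; norm_num
  have hsub : A ∩ (fun x => x + h) ⁻¹' Aᶜ ⊆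
      (A ∩ (fun x => x + k) ⁻¹' Aᶜ) ∪ (fun x => x + k) ⁻¹' (A ∩ (fun x => x + k) ⁻¹' Aᶜ) := by
    rintro x ⟨hx, hx2⟩
    by_cases hc : x + k ∈ A
    · right
      refine ⟨hc, ?_⟩
      simpa [hh, add_assoc] using hx2
    · left; exact ⟨hx, hc⟩
  calc DD N A h ≤ _ := measure_mono hsub
    _ ≤ _ := measure_union_le _ _
    _ = DD N A k + DD N A k := by
      rw [measure_preimage_add_right]; rfl
    _ = 2 * DD N A k := by ring

lemma DD_le {N : ℕ} (A : Set (EuclideanSpace ℝ (Fin N))) (h) : DD N A h ≤ volume A :=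
  measure_mono Set.inter_subset_left

lemma lint_smul {N : ℕ} {c : ℝ} (hc : 0 < c) (f : EuclideanSpace ℝ (Fin N) → ℝ≥0∞)
    (hf : Measurable f) :
    ∫⁻ x, f x = ENNReal.ofReal (c ^ N) * ∫⁻ x, f (c • x) := by
  have h1 := Measure.map_addHaar_smul (volume : Measure (EuclideanSpace ℝ (Fin N))) hc.ne'
  have h2 : ∫⁻ x, f (c • x) = ∫⁻ x, f x ∂(Measure.map (c • ·) volume) := by
    rw [lintegral_map hf (by fun_prop)]
  rw [h2, h1, lintegral_smul_measure, smul_eq_mul, ← mul_assoc, ← ENNReal.ofReal_mul (by positivity)]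
  rw [finrank_euclideanSpace, Fintype.card_fin, abs_of_pos (by positivity), mul_inv_cancel₀ (by positivity)]
  simp

lemma krn_smul {N : ℕ} {c : ℝ} (hc : 0 < c) (α : ℝ) (h : EuclideanSpace ℝ (Fin N)) :
    krn N α (c • h) = ENNReal.ofReal (c ^ (-((N : ℝ) + α))) * krn N α h := by
  unfold krn
  rw [← ENNReal.ofReal_mul (by positivity), norm_smul, Real.norm_of_nonneg hc.le,
    Real.mul_rpow hc.le (norm_nonneg _)]

noncomputable def SS (N : ℕ) (t R : ℝ) (A : Set (EuclideanSpace ℝ (Fin N))) : ℝ≥0∞ :=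
  ∫⁻ h in shl N R, krn N t h * DD N A h

lemma SS_half {N : ℕ} {A : Set (EuclideanSpace ℝ (Fin N))} (hA : MeasurableSet A) (t R : ℝ) :
    ENNReal.ofReal ((2:ℝ) ^ (t - 1)) * SS N t R A ≤ SS N t (R / 2) A := by
  have m0 : Measurable fun h => krn N t h * DD N A h := (krn_meas N t).mul (DD_meas hA)
  unfold SS
  rw [← lintegral_indicator (shl_meas N R), ← lintegral_indicator (shl_meas N (R/2)),
    lint_smul (c := 2⁻¹) (by norm_num) _ (m0.indicator (shl_meas N (R/2))),
    ← lintegral_const_mul _ (m0.indicator (shl_meas N R)),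
    ← lintegral_const_mul]
  swap
  · exact (m0.indicator (shl_meas N (R/2))).comp (by fun_prop)
  refine lintegral_mono fun h => ?_
  have hmem : (2⁻¹ : ℝ) • h ∈ shl N (R/2) ↔ h ∈ shl N R := by
    simp only [shl, Set.mem_ofPred_eq, norm_smul, norm_inv, Real.norm_ofNat]
    constructor <;> rintro ⟨a, b⟩ <;> constructor <;> linarith
  by_cases hh : h ∈ shl N R
  · simp only [Set.indicator_of_mem hh, Set.indicator_of_mem (hmem.2 hh)]
    rw [krn_smul (by norm_num)]
    calc _ ≤ ENNReal.ofReal ((2:ℝ) ^ (t - 1)) * (krn N t h * (2 * DD N A ((2⁻¹ : ℝ) • h))) := by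
          gcongr; exact DD_two h
      _ = (ENNReal.ofReal ((2:ℝ) ^ (t - 1)) * ENNReal.ofReal 2) *
          (krn N t h * DD N A ((2⁻¹ : ℝ) • h)) := by
          rw [ENNReal.ofReal_ofNat]; ring
      _ = (ENNReal.ofReal ((2⁻¹:ℝ) ^ N) * ENNReal.ofReal ((2⁻¹:ℝ) ^ (-((N : ℝ) + t)))) *
          (krn N t h * DD N A ((2⁻¹ : ℝ) • h)) := by
          congr 1
          rw [← ENNReal.ofReal_mul (by positivity), ← ENNReal.ofReal_mul (by positivity)]
          congr 1
          rw [Real.inv_rpow (by norm_num), ← Real.rpow_neg (by norm_num), neg_neg, inv_pow,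
            ← Real.rpow_natCast, ← Real.rpow_neg (by norm_num), ← Real.rpow_add (by norm_num)]
          nth_rw 2 [← Real.rpow_one 2]
          rw [← Real.rpow_add (by norm_num)]
          congr 1; ring
      _ = _ := by ring
  · simp only [Set.indicator_of_notMem hh, mul_zero]; exact zero_le

lemma SS_pow {N : ℕ} {A : Set (EuclideanSpace ℝ (Fin N))} (hA : MeasurableSet A) (t R : ℝ)
    (j : ℕ) : (ENNReal.ofReal ((2:ℝ) ^ (t - 1))) ^ j * SS N t R A ≤ SS N t (R / 2 ^ j) A := by
  induction j with
  | zero => simp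
  | succ j ih =>
    calc _ = ENNReal.ofReal ((2:ℝ) ^ (t - 1)) *
          ((ENNReal.ofReal ((2:ℝ) ^ (t - 1))) ^ j * SS N t R A) := by ring
      _ ≤ ENNReal.ofReal ((2:ℝ) ^ (t - 1)) * SS N t (R / 2 ^ j) A := by gcongr
      _ ≤ SS N t (R / 2 ^ j / 2) A := SS_half hA _ _
      _ = _ := by congr 1; rw [pow_succ]; field_simp

lemma shl_disj (N : ℕ) {R : ℝ} (hR : 0 < R) :
    Pairwise (Function.onFun Disjoint (fun j : ℕ => shl N (R / 2 ^ j))) := by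
  have key : ∀ i j : ℕ, i < j → Disjoint (shl N (R / 2 ^ i)) (shl N (R / 2 ^ j)) := by
    intro i j hij
    rw [Set.disjoint_left]
    rintro x ⟨h1, _⟩ ⟨_, h2⟩
    have : R / 2 ^ j ≤ R / 2 ^ i / 2 := by
      rw [div_div, ← pow_succ]
      gcongr
      · norm_num
      · exact hij
    linarith
  intro i j hij
  rcases lt_or_gt_of_ne hij with h | h
  · exact key i j h
  · exact (key j i h).symm

lemma two_rpow_bound {x : ℝ} (hx : 0 ≤ x) : 1 - (2:ℝ) ^ (-x) ≤ x := by
  have h1 : (2:ℝ) ^ (-x) = Real.exp (-(x * Real.log 2)) := by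
    rw [Real.rpow_def_of_pos (by norm_num)]; congr 1; ring
  have h2 := Real.add_one_le_exp (-(x * Real.log 2))
  have h3 := Real.log_two_lt_d9
  rw [h1]; nlinarith

lemma two_rpow_bound2 {x : ℝ} (hx : 0 ≤ x) (hx1 : x ≤ 1) : x / 2 ≤ 1 - (2:ℝ) ^ (-x) := by
  have h := rpow_one_add_le_one_add_mul_self (s := -(1/2)) (p := x) (by norm_num) hx hx1
  have e : (2:ℝ) ^ (-x) = (1 + -(1/2)) ^ x := by
    rw [Real.rpow_neg (by norm_num), ← Real.inv_rpow (by norm_num)]; norm_num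
  rw [e]; linarith

lemma SS_le {N : ℕ} {A : Set (EuclideanSpace ℝ (Fin N))} (hA : MeasurableSet A) {t R : ℝ}
    (ht1 : t < 1) (hR : 0 < R) :
    SS N t R A ≤ ENNReal.ofReal (1 - t) * fracPer N t A := by
  set q := (2:ℝ) ^ (t - 1) with hq
  have hq0 : 0 < q := by positivity
  have hq1 : q < 1 := Real.rpow_lt_one_of_one_lt_of_neg (by norm_num) (by linarith)
  have hqt : 1 - q ≤ 1 - t := by
    have := two_rpow_bound (x := 1 - t) (by linarith)
    rwa [neg_sub] at this
  have h1 : ∑' j : ℕ, SS N t (R / 2 ^ j) A ≤ fracPer N t A := by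
    rw [fracPer_eq hA]
    unfold SS
    rw [← lintegral_iUnion (fun j => shl_meas N _) (shl_disj N hR)]
    exact setLIntegral_le_lintegral _ _
  have h2 : (∑' j : ℕ, (ENNReal.ofReal q) ^ j) * SS N t R A ≤ fracPer N t A := by
    rw [← ENNReal.tsum_mul_right]
    exact (ENNReal.tsum_le_tsum fun j => SS_pow hA t R j).trans h1
  rw [ENNReal.tsum_geometric] at h2
  have e : 1 - ENNReal.ofReal q = ENNReal.ofReal (1 - q) := by
    rw [ENNReal.ofReal_sub _ hq0.le, ENNReal.ofReal_one]
  rw [e] at h2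
  calc SS N t R A = (ENNReal.ofReal (1 - q) * (ENNReal.ofReal (1 - q))⁻¹) * SS N t R A := by
        rw [ENNReal.mul_inv_cancel, one_mul]
        · simpa using hq1
        · simp
    _ = ENNReal.ofReal (1 - q) * ((ENNReal.ofReal (1 - q))⁻¹ * SS N t R A) := by ring
    _ ≤ ENNReal.ofReal (1 - t) * fracPer N t A := by gcongr


noncomputable def om (N : ℕ) : ℝ := (volume (Metric.ball (0 : EuclideanSpace ℝ (Fin N)) 1)).toReal

lemma om_pos (N : ℕ) : 0 < om N :=
  ENNReal.toReal_pos (Metric.measure_ball_pos _ _ one_pos).ne' measure_ball_lt_top.ne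

lemma vol_ball {N : ℕ} (x : EuclideanSpace ℝ (Fin N)) {r : ℝ} (hr : 0 < r) :
    volume (Metric.ball x r) = ENNReal.ofReal (om N * r ^ N) := by
  rw [Measure.addHaar_ball_of_pos _ _ hr, finrank_euclideanSpace, Fintype.card_fin,
    mul_comm, ENNReal.ofReal_mul (om_pos N).le, om, ENNReal.ofReal_toReal measure_ball_lt_top.ne]

lemma vol_shl_le {N : ℕ} {R : ℝ} (hR : 0 < R) : volume (shl N R) ≤ ENNReal.ofReal (om N * R ^ N) := by
  rw [← vol_ball (0 : EuclideanSpace ℝ (Fin N)) hR]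
  refine measure_mono fun x hx => ?_
  simpa using hx.2

lemma le_vol_shl {N : ℕ} (hN : 0 < N) {R : ℝ} (hR : 0 < R) :
    ENNReal.ofReal (om N * R ^ N / 2) ≤ volume (shl N R) := by
  have e : shl N R = Metric.ball 0 R \ Metric.ball 0 (R / 2) := by
    ext x; simp [shl, and_comm]
  rw [e, measure_sdiff (Metric.ball_subset_ball (by linarith)) measurableSet_ball.nullMeasurableSet
    measure_ball_lt_top.ne, vol_ball _ hR, vol_ball _ (half_pos hR),
    ← ENNReal.ofReal_sub _ (by have := om_pos N; positivity)]
  apply ENNReal.ofReal_le_ofReal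
  have h1 : (R / 2) ^ N ≤ R ^ N / 2 := by
    rw [div_pow]
    have : (2:ℝ) ^ 1 ≤ 2 ^ N := pow_le_pow_right₀ (by norm_num) hN
    gcongr
    linarith
  have := om_pos N
  nlinarith

lemma krn_le {N : ℕ} {α r : ℝ} (hα : 0 < α) (hr : 0 < r) {h : EuclideanSpace ℝ (Fin N)}
    (hh : r ≤ ‖h‖) : krn N α h ≤ ENNReal.ofReal (r ^ (-((N : ℝ) + α))) := by
  apply ENNReal.ofReal_le_ofReal
  apply Real.rpow_le_rpow_of_nonpos hr hh
  have : (0:ℝ) ≤ N := Nat.cast_nonneg N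
  linarith

lemma le_krn {N : ℕ} {α R : ℝ} (hα : 0 < α) {h : EuclideanSpace ℝ (Fin N)} (h0 : 0 < ‖h‖)
    (hh : ‖h‖ ≤ R) : ENNReal.ofReal (R ^ (-((N : ℝ) + α))) ≤ krn N α h := by
  apply ENNReal.ofReal_le_ofReal
  apply Real.rpow_le_rpow_of_nonpos h0 hh
  have : (0:ℝ) ≤ N := Nat.cast_nonneg N
  linarith

lemma krn_zero {N : ℕ} {α : ℝ} (hα : 0 < α) : krn N α 0 = 0 := by
  have : (0:ℝ) ≤ N := Nat.cast_nonneg N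
  rw [krn, norm_zero, Real.zero_rpow (show (-((N : ℝ) + α)) ≠ 0 by linarith), ENNReal.ofReal_zero]

lemma cov_near {N : ℕ} {R : ℝ} {h : EuclideanSpace ℝ (Fin N)} (h0 : 0 < ‖h‖)
    (hR : ‖h‖ < R) : h ∈ ⋃ j : ℕ, shl N (R / 2 ^ j) := by
  have hRp : 0 < R := h0.trans hR
  obtain ⟨n, hn1, hn2⟩ := exists_nat_pow_near (x := R / ‖h‖) (y := 2)
    ((one_le_div h0).2 hR.le) (by norm_num)
  rw [Set.mem_iUnion]
  rw [le_div_iff₀ h0] at hn1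
  rw [div_lt_iff₀ h0] at hn2
  rcases hn1.lt_or_eq with hlt | heq
  · refine ⟨n, ?_, ?_⟩
    · rw [div_div, ← pow_succ, div_le_iff₀ (by positivity)]; linarith
    · rw [lt_div_iff₀ (by positivity)]; linarith
  · cases n with
    | zero => simp at heq; linarith
    | succ n =>
      refine ⟨n, ?_, ?_⟩
      · rw [div_div, ← pow_succ, div_le_iff₀ (by positivity)]; linarith
      · rw [lt_div_iff₀ (by positivity)]
        rw [pow_succ] at heq
        have : 0 < 2 ^ n * ‖h‖ := by positivity
        linarith

lemma cov_far {N : ℕ} {r : ℝ} (hr : 0 < r) {h : EuclideanSpace ℝ (Fin N)} (hh : r ≤ ‖h‖) :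
    h ∈ ⋃ j : ℕ, shl N (r * 2 ^ (j + 1)) := by
  obtain ⟨n, hn1, hn2⟩ := exists_nat_pow_near (x := ‖h‖ / r) (y := 2)
    ((one_le_div hr).2 hh) (by norm_num)
  rw [Set.mem_iUnion]
  rw [le_div_iff₀ hr] at hn1
  rw [div_lt_iff₀ hr] at hn2
  refine ⟨n, ?_, ?_⟩
  · rw [pow_succ]; linarith
  · linarith

lemma geo {q : ℝ} (h0 : 0 ≤ q) (h1 : q < 1) :
    ∑' j : ℕ, (ENNReal.ofReal q) ^ j = ENNReal.ofReal ((1 - q)⁻¹) := by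
  rw [ENNReal.tsum_geometric, ENNReal.ofReal_inv_of_pos (by linarith), ENNReal.ofReal_sub _ h0,
    ENNReal.ofReal_one]

lemma lint_near_far {N : ℕ} (f : EuclideanSpace ℝ (Fin N) → ℝ≥0∞) (h0 : f 0 = 0) (R : ℝ) :
    ∫⁻ h, f h ≤ (∑' j : ℕ, ∫⁻ h in shl N (R / 2 ^ j), f h) + ∫⁻ h in {h | R ≤ ‖h‖}, f h := by
  have e : ∫⁻ h, f h = ∫⁻ h in {0}ᶜ, f h := by
    rw [← lintegral_add_compl f (measurableSet_singleton 0), lintegral_singleton, h0, zero_mul,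
      zero_add]
  rw [e]
  calc _ ≤ ∫⁻ h in ((⋃ j : ℕ, shl N (R / 2 ^ j)) ∪ {h | R ≤ ‖h‖}), f h := by
        apply lintegral_mono_set
        intro h hh
        have hp : 0 < ‖h‖ := norm_pos_iff.2 hh
        rcases lt_or_ge ‖h‖ R with h1 | h1
        · left; exact cov_near hp h1
        · right; exact h1
    _ ≤ _ := lintegral_union_le _ _ _
    _ ≤ _ := by gcongr; exact lintegral_iUnion_le _ _

lemma tail {N : ℕ} {α r : ℝ} (hα : 0 < α) (hα1 : α ≤ 1) (hr : 0 < r) :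
    ∫⁻ h in {h | r ≤ ‖h‖}, krn N α h ≤ ENNReal.ofReal (2 ^ (N + 1) * om N / α * r ^ (-α)) := by
  have hom := om_pos N
  have hq1 : (2:ℝ) ^ (-α) < 1 := Real.rpow_lt_one_of_one_lt_of_neg (by norm_num) (by linarith)
  calc _ ≤ ∫⁻ h in ⋃ j : ℕ, shl N (r * 2 ^ (j + 1)), krn N α h :=
        lintegral_mono_set fun h hh => cov_far hr hh
    _ ≤ ∑' j : ℕ, ∫⁻ h in shl N (r * 2 ^ (j + 1)), krn N α h := lintegral_iUnion_le _ _
    _ ≤ ∑' j : ℕ, ENNReal.ofReal (om N * 2 ^ N * r ^ (-α)) * (ENNReal.ofReal ((2:ℝ) ^ (-α))) ^ j := by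
        refine ENNReal.tsum_le_tsum fun j => ?_
        have hj : 0 < r * 2 ^ j := by positivity
        calc _ ≤ ∫⁻ h in shl N (r * 2 ^ (j + 1)), ENNReal.ofReal ((r * 2 ^ j) ^ (-((N : ℝ) + α))) := by
              refine setLIntegral_mono' (shl_meas _ _) fun h hh => krn_le hα hj ?_
              have := hh.1
              rw [pow_succ] at this; linarith
          _ = ENNReal.ofReal ((r * 2 ^ j) ^ (-((N : ℝ) + α))) * volume (shl N (r * 2 ^ (j + 1))) :=
              setLIntegral_const _ _
          _ ≤ ENNReal.ofReal ((r * 2 ^ j) ^ (-((N : ℝ) + α))) *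
              ENNReal.ofReal (om N * (r * 2 ^ (j + 1)) ^ N) := by
              gcongr; exact vol_shl_le (by positivity)
          _ = _ := by
              rw [← ENNReal.ofReal_pow (by positivity), ← ENNReal.ofReal_mul (by positivity),
                ← ENNReal.ofReal_mul (by positivity)]
              congr 1
              have e1 : r * 2 ^ (j + 1) = (r * 2 ^ j) * 2 := by ring
              have e2 : (r * 2 ^ j) ^ (-((N : ℝ) + α)) * (r * 2 ^ j) ^ N = (r * 2 ^ j) ^ (-α) := by
                rw [← Real.rpow_natCast (r * 2 ^ j) N, ← Real.rpow_add hj]; congr 1; ring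
              have e3 : (r * 2 ^ j) ^ (-α) = r ^ (-α) * ((2:ℝ) ^ (-α)) ^ j := by
                rw [Real.mul_rpow hr.le (by positivity), ← Real.rpow_natCast, ← Real.rpow_mul (by norm_num),
                  ← Real.rpow_natCast, ← Real.rpow_mul (by norm_num), mul_comm (j:ℝ)]
              rw [e1, mul_pow]
              calc _ = om N * 2 ^ N * ((r * 2 ^ j) ^ (-((N : ℝ) + α)) * (r * 2 ^ j) ^ N) := by ring
                _ = _ := by rw [e2, e3]; ring
    _ = ENNReal.ofReal (om N * 2 ^ N * r ^ (-α)) * ENNReal.ofReal ((1 - (2:ℝ) ^ (-α))⁻¹) := by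
        rw [ENNReal.tsum_mul_left, geo (by positivity) hq1]
    _ ≤ _ := by
        rw [← ENNReal.ofReal_mul (by positivity)]
        apply ENNReal.ofReal_le_ofReal
        have := two_rpow_bound2 hα.le hα1
        have h3 : (1 - (2:ℝ) ^ (-α))⁻¹ ≤ 2 / α := by
          rw [← inv_div]; gcongr
        calc _ ≤ om N * 2 ^ N * r ^ (-α) * (2 / α) := by gcongr
          _ = _ := by rw [pow_succ]; ring

lemma SS_st {N : ℕ} {A : Set (EuclideanSpace ℝ (Fin N))} (hA : MeasurableSet A) {s t R : ℝ}
    (hst : s < t) (hR : 0 < R) :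
    SS N s R A ≤ ENNReal.ofReal (R ^ (t - s)) * SS N t R A := by
  unfold SS
  have m0 : Measurable fun h => krn N t h * DD N A h := (krn_meas N t).mul (DD_meas hA)
  rw [← lintegral_const_mul _ m0]
  refine setLIntegral_mono' (shl_meas _ _) fun h hh => ?_
  rw [← mul_assoc]
  gcongr
  have hp : 0 < ‖h‖ := lt_of_lt_of_le (by linarith) hh.1
  unfold krn
  rw [← ENNReal.ofReal_mul (by positivity)]
  apply ENNReal.ofReal_le_ofReal
  calc ‖h‖ ^ (-((N : ℝ) + s)) = ‖h‖ ^ (t - s) * ‖h‖ ^ (-((N : ℝ) + t)) := by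
        rw [← Real.rpow_add hp]; congr 1; ring
    _ ≤ _ := by
      have := hh.2.le
      gcongr

lemma interp0 {N : ℕ} {A : Set (EuclideanSpace ℝ (Fin N))} (hA : MeasurableSet A) {s t R δ : ℝ}
    (hδ : 0 < δ) (hs : 0 < s) (ht : t < 1) (hst : δ ≤ t - s) (hR : 0 < R) (hR1 : R ≤ 1) :
    fracPer N s A ≤ ENNReal.ofReal (R ^ δ * (1 - (2:ℝ) ^ (-δ))⁻¹) *
      (ENNReal.ofReal (1 - t) * fracPer N t A) +
      ENNReal.ofReal (2 ^ (N + 1) * om N / s * R ^ (-s)) * volume A := by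
  have hq1 : (2:ℝ) ^ (-δ) < 1 := Real.rpow_lt_one_of_one_lt_of_neg (by norm_num) (by linarith)
  rw [fracPer_eq hA s]
  refine (lint_near_far _ (by simp [krn_zero hs]) R).trans ?_
  gcongr
  · calc _ ≤ ∑' j : ℕ, (ENNReal.ofReal (R ^ δ) * (ENNReal.ofReal ((2:ℝ) ^ (-δ))) ^ j) *
          (ENNReal.ofReal (1 - t) * fracPer N t A) := by
          refine ENNReal.tsum_le_tsum fun j => ?_
          have hj : 0 < R / 2 ^ j := by positivity
          have hj1 : R / 2 ^ j ≤ 1 := by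
            rw [div_le_one (by positivity)]
            exact hR1.trans (one_le_pow₀ (by norm_num))
          refine (SS_st hA (t := t) (by linarith) hj).trans ?_
          refine mul_le_mul' ?_ (SS_le hA ht hj)
          rw [← ENNReal.ofReal_pow (by positivity), ← ENNReal.ofReal_mul (by positivity)]
          apply ENNReal.ofReal_le_ofReal
          calc _ ≤ (R / 2 ^ j) ^ δ := Real.rpow_le_rpow_of_exponent_ge hj hj1 hst
            _ = _ := by
              rw [div_eq_mul_inv, Real.mul_rpow hR.le (by positivity),
                Real.inv_rpow (by positivity), ← Real.rpow_neg (by positivity),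
                ← Real.rpow_natCast, ← Real.rpow_mul (by norm_num),
                ← Real.rpow_natCast, ← Real.rpow_mul (by norm_num), mul_comm (j:ℝ)]
      _ = _ := by
          rw [ENNReal.tsum_mul_right, ENNReal.tsum_mul_left, geo (by positivity) hq1,
            ← ENNReal.ofReal_mul (by positivity)]
  · calc _ ≤ ∫⁻ h in {h | R ≤ ‖h‖}, krn N s h * volume A := by
          gcongr; exact DD_le _ _
      _ = (∫⁻ h in {h | R ≤ ‖h‖}, krn N s h) * volume A := lintegral_mul_const _ (krn_meas N s)
      _ ≤ _ := by gcongr; exact tail hs (by linarith) hR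

lemma interp (N : ℕ) {δ : ℝ} (hδ : 0 < δ) : ∃ K : ℝ, 0 < K ∧
    ∀ s t : ℝ, 0 < s → t < 1 → δ ≤ t - s → ∀ A : Set (EuclideanSpace ℝ (Fin N)),
      MeasurableSet A → ENNReal.ofReal s * fracPer N s A ≤
        ENNReal.ofReal (1 / 4) * (ENNReal.ofReal (1 - t) * fracPer N t A) +
          ENNReal.ofReal K * volume A := by
  have hom := om_pos N
  have hq1 : (2:ℝ) ^ (-δ) < 1 := Real.rpow_lt_one_of_one_lt_of_neg (by norm_num) (by linarith)
  set G := (1 - (2:ℝ) ^ (-δ))⁻¹ with hG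
  have hGp : 0 < G := inv_pos.2 (by linarith)
  set R := min 1 ((1 / (4 * G)) ^ (1 / δ)) with hRdef
  have hR : 0 < R := by positivity
  have hR1 : R ≤ 1 := min_le_left _ _
  have hRG : R ^ δ * G ≤ 1 / 4 := by
    have : R ^ δ ≤ 1 / (4 * G) := by
      calc R ^ δ ≤ ((1 / (4 * G)) ^ (1 / δ)) ^ δ := by gcongr; exact min_le_right _ _
        _ = _ := by rw [← Real.rpow_mul (by positivity), one_div_mul_cancel hδ.ne', Real.rpow_one]
    calc _ ≤ 1 / (4 * G) * G := by gcongr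
      _ = _ := by field_simp
  refine ⟨2 ^ (N + 1) * om N * R ^ (-1:ℝ), by positivity, fun s t hs ht hst A hA => ?_⟩
  calc _ ≤ ENNReal.ofReal s * (ENNReal.ofReal (R ^ δ * G) *
      (ENNReal.ofReal (1 - t) * fracPer N t A) +
      ENNReal.ofReal (2 ^ (N + 1) * om N / s * R ^ (-s)) * volume A) := by
        gcongr; exact interp0 hA hδ hs ht hst hR hR1
    _ = ENNReal.ofReal (s * (R ^ δ * G)) * (ENNReal.ofReal (1 - t) * fracPer N t A) +
        ENNReal.ofReal (s * (2 ^ (N + 1) * om N / s * R ^ (-s))) * volume A := by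
        rw [ENNReal.ofReal_mul hs.le, ENNReal.ofReal_mul hs.le]; ring
    _ ≤ _ := by
        gcongr ?_ * _ + ?_ * _
        · apply ENNReal.ofReal_le_ofReal
          have : 0 < R ^ δ * G := by positivity
          nlinarith
        · apply ENNReal.ofReal_le_ofReal
          calc _ = 2 ^ (N + 1) * om N * R ^ (-s) := by field_simp
            _ ≤ _ := by
              gcongr ?_ * ?_
              exact Real.rpow_le_rpow_of_exponent_ge hR hR1 (by linarith)


lemma int_DD {N : ℕ} {A : Set (EuclideanSpace ℝ (Fin N))} (hA : MeasurableSet A)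
    (S : Set (EuclideanSpace ℝ (Fin N))) :
    volume A * (volume S - volume A) ≤ ∫⁻ h in S, DD N A h := by
  have e : ∫⁻ h in S, DD N A h = ∫⁻ x in A, ∫⁻ h in S, Aᶜ.indicator 1 (x + h) := by
    simp_rw [DD_eq hA]
    exact lintegral_lintegral_swap (ind_meas hA).aemeasurable
  rw [e, mul_comm, ← setLIntegral_const]
  refine lintegral_mono fun x => ?_
  have h2 : MeasurableSet ((fun h => x + h) ⁻¹' Aᶜ) := hA.compl.preimage (by fun_prop)
  have : ∀ h, Aᶜ.indicator (1 : EuclideanSpace ℝ (Fin N) → ℝ≥0∞) (x + h)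
      = ((fun h => x + h) ⁻¹' Aᶜ).indicator 1 h := fun x => rfl
  simp_rw [this]
  rw [lintegral_indicator_one h2, Measure.restrict_apply h2]
  have hpre : volume ((fun h => x + h) ⁻¹' A) = volume A := measure_preimage_add _ _ _
  rw [← hpre]
  refine (le_measure_sdiff).trans (measure_mono ?_)
  rintro h ⟨h1, h3⟩
  exact ⟨h3, h1⟩

lemma isop {N : ℕ} (hN : 0 < N) : ∃ c : ℝ, 0 < c ∧ ∀ t : ℝ, 0 < t → t < 1 →
    ∀ A : Set (EuclideanSpace ℝ (Fin N)), MeasurableSet A → ∀ v : ℝ, 0 < v →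
      volume A = ENNReal.ofReal v →
      ENNReal.ofReal (c * v ^ (1 - t / N)) ≤ ENNReal.ofReal (1 - t) * fracPer N t A := by
  have hom := om_pos N
  set b := min 1 (om N / 4) with hb
  have hb0 : 0 < b := by positivity
  have hb1 : b ≤ 1 := min_le_left _ _
  refine ⟨b ^ (2:ℝ), by positivity, fun t ht0 ht A hA v hv hvA => ?_⟩
  have hNr : (0:ℝ) < N := by exact_mod_cast hN
  have hNr1 : (1:ℝ) ≤ N := by exact_mod_cast hN
  set R := (4 * v / om N) ^ (1 / (N:ℝ)) with hR
  have hRp : 0 < R := by positivity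
  have hRN : R ^ N = 4 * v / om N := by
    rw [hR, ← Real.rpow_natCast, ← Real.rpow_mul (by positivity), one_div_mul_cancel hNr.ne', Real.rpow_one]
  have hvol : ENNReal.ofReal (2 * v) ≤ volume (shl N R) := by
    refine le_trans (ENNReal.ofReal_le_ofReal ?_) (le_vol_shl hN hRp)
    rw [hRN]; apply le_of_eq; field_simp; norm_num
  refine le_trans ?_ (SS_le hA ht hRp)
  calc _ ≤ ENNReal.ofReal (R ^ (-((N : ℝ) + t))) * (ENNReal.ofReal v * ENNReal.ofReal v) := by
        rw [← ENNReal.ofReal_mul hv.le, ← ENNReal.ofReal_mul (by positivity)]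
        apply ENNReal.ofReal_le_ofReal
        have e1 : R ^ (-((N : ℝ) + t)) = (4 * v / om N) ^ (-(1 + t / N)) := by
          rw [hR, ← Real.rpow_mul (by positivity)]; congr 1; field_simp
        have e2 : (4 * v / om N) ^ (-(1 + t / N)) = v ^ (-(1 + t / N)) * (om N / 4) ^ (1 + t / N) := by
          rw [show 4 * v / om N = v * (om N / 4)⁻¹ by field_simp, Real.mul_rpow hv.le (by positivity),
            Real.inv_rpow (by positivity), ← Real.rpow_neg (by positivity), neg_neg]
        have e3 : v ^ (1 - t / N) = v ^ (-(1 + t / N)) * (v * v) := by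
          rw [show v * v = v ^ (2:ℝ) by norm_num [sq], ← Real.rpow_add hv]; congr 1; ring
        have htN : t / N ≤ 1 := by rw [div_le_one hNr]; linarith
        have e4 : b ^ (2:ℝ) ≤ (om N / 4) ^ (1 + t / N) := by
          calc b ^ (2:ℝ) ≤ b ^ (1 + t / N) := Real.rpow_le_rpow_of_exponent_ge hb0 hb1 (by linarith)
            _ ≤ _ := by gcongr; exact min_le_right _ _
        rw [e1, e2, e3]
        calc _ ≤ (om N / 4) ^ (1 + t / N) * (v ^ (-(1 + t / N)) * (v * v)) := by gcongr
          _ = _ := by ring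
    _ ≤ ENNReal.ofReal (R ^ (-((N : ℝ) + t))) * ∫⁻ h in shl N R, DD N A h := by
        gcongr
        refine le_trans ?_ (int_DD hA _)
        rw [hvA]
        gcongr
        calc ENNReal.ofReal v = ENNReal.ofReal (2 * v) - ENNReal.ofReal v := by
              rw [← ENNReal.ofReal_sub _ hv.le]; congr 1; ring
          _ ≤ _ := by gcongr
    _ = ∫⁻ h in shl N R, ENNReal.ofReal (R ^ (-((N : ℝ) + t))) * DD N A h :=
        (lintegral_const_mul _ (DD_meas hA)).symm
    _ ≤ _ := by
        refine setLIntegral_mono' (shl_meas _ _) fun h hh => ?_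
        gcongr
        exact le_krn ht0 (lt_of_lt_of_le (by linarith) hh.1) hh.2.le

lemma DD_ball {N : ℕ} {ρ : ℝ} (hρ : 0 < ρ) (h : EuclideanSpace ℝ (Fin N)) :
    DD N (Metric.ball 0 ρ) h ≤ ENNReal.ofReal (om N * ρ ^ N * N / ρ * ‖h‖) := by
  have hom := om_pos N
  rcases Nat.eq_zero_or_pos N with rfl | hN
  · have : h = 0 := Subsingleton.elim _ _
    subst this
    simp [DD]
  have hN1 : (1:ℝ) ≤ N := by exact_mod_cast hN
  rcases lt_or_ge ‖h‖ ρ with hl | hl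
  · have hp : 0 < ρ - ‖h‖ := by linarith
    calc DD N (Metric.ball 0 ρ) h ≤ volume (Metric.ball (0 : EuclideanSpace ℝ (Fin N)) ρ \ Metric.ball 0 (ρ - ‖h‖)) := by
          refine measure_mono ?_
          rintro x ⟨hx, hx2⟩
          refine ⟨hx, fun hx3 => hx2 ?_⟩
          simp only [Metric.mem_ball, dist_zero_right] at hx3 ⊢
          linarith [norm_add_le x h]
      _ = ENNReal.ofReal (om N * ρ ^ N - om N * (ρ - ‖h‖) ^ N) := by
          rw [measure_sdiff (Metric.ball_subset_ball (by linarith [norm_nonneg h]))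
            measurableSet_ball.nullMeasurableSet
            measure_ball_lt_top.ne, vol_ball _ hρ, vol_ball _ hp,
            ← ENNReal.ofReal_sub _ (by positivity)]
      _ ≤ _ := by
          apply ENNReal.ofReal_le_ofReal
          have hB := one_add_mul_le_pow (a := -(‖h‖ / ρ)) (by
            have : ‖h‖ / ρ ≤ 1 := by rw [div_le_one hρ]; exact hl.le
            linarith) N
          have e : (ρ - ‖h‖) ^ N = ρ ^ N * (1 + -(‖h‖ / ρ)) ^ N := by
            rw [← mul_pow]; congr 1; field_simp; ring
          rw [e]
          have : om N * ρ ^ N * (1 + N * -(‖h‖ / ρ)) ≤ om N * ρ ^ N * (1 + -(‖h‖ / ρ)) ^ N := by gcongr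
          calc _ = om N * ρ ^ N - om N * ρ ^ N * (1 + -(‖h‖ / ρ)) ^ N := by ring
            _ ≤ om N * ρ ^ N - om N * ρ ^ N * (1 + N * -(‖h‖ / ρ)) := by linarith
            _ = _ := by ring
  · refine (DD_le _ _).trans ?_
    rw [vol_ball _ hρ]
    apply ENNReal.ofReal_le_ofReal
    calc om N * ρ ^ N = om N * ρ ^ N * 1 / ρ * ρ := by field_simp
      _ ≤ _ := by gcongr

lemma ball_per (N : ℕ) {δ ρ : ℝ} (hδ : 0 < δ) (hρ : 0 < ρ) : ∃ C : ℝ, 0 < C ∧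
    ∀ t : ℝ, δ ≤ t → t < 1 →
      ENNReal.ofReal (1 - t) * fracPer N t (Metric.ball 0 ρ) ≤ ENNReal.ofReal C := by
  have hom := om_pos N
  set L := om N * ρ ^ N * N / ρ with hL
  have hL0 : 0 ≤ L := by positivity
  refine ⟨2 ^ (N + 1) * L * om N * 2 + 2 ^ (N + 1) * om N / δ * (om N * ρ ^ N), by positivity, fun t hδt ht1 => ?_⟩
  have ht0 : 0 < t := by linarith
  have hq1 : (2:ℝ) ^ (-(1 - t)) < 1 := Real.rpow_lt_one_of_one_lt_of_neg (by norm_num) (by linarith)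
  have hA : MeasurableSet (Metric.ball (0 : EuclideanSpace ℝ (Fin N)) ρ) := measurableSet_ball
  have near : ∀ j : ℕ, ∫⁻ h in shl N (1 / 2 ^ j), krn N t h * DD N (Metric.ball 0 ρ) h ≤
      ENNReal.ofReal (2 ^ (N + 1) * L * om N) * (ENNReal.ofReal ((2:ℝ) ^ (-(1 - t)))) ^ j := by
    intro j
    set R : ℝ := 1 / 2 ^ j with hR
    have hRp : 0 < R := by positivity
    calc _ ≤ ∫⁻ h in shl N R, ENNReal.ofReal ((R / 2) ^ (-((N : ℝ) + t))) * ENNReal.ofReal (L * R) := by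
          refine setLIntegral_mono' (shl_meas _ _) fun h hh => ?_
          refine mul_le_mul' (krn_le ht0 (by positivity) hh.1) ((DD_ball hρ h).trans ?_)
          apply ENNReal.ofReal_le_ofReal
          have := hh.2.le
          gcongr
      _ ≤ (ENNReal.ofReal ((R / 2) ^ (-((N : ℝ) + t))) * ENNReal.ofReal (L * R)) *
          ENNReal.ofReal (om N * R ^ N) := by
          rw [setLIntegral_const]; gcongr; exact vol_shl_le hRp
      _ ≤ _ := by
          rw [← ENNReal.ofReal_pow (by positivity), ← ENNReal.ofReal_mul (by positivity),
            ← ENNReal.ofReal_mul (by positivity), ← ENNReal.ofReal_mul (by positivity)]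
          apply ENNReal.ofReal_le_ofReal
          have e1 : (R / 2) ^ (-((N : ℝ) + t)) = R ^ (-((N : ℝ) + t)) * 2 ^ ((N:ℝ) + t) := by
            rw [div_eq_mul_inv, Real.mul_rpow hRp.le (by norm_num), Real.inv_rpow (by norm_num),
              ← Real.rpow_neg (by norm_num), neg_neg]
          have e2 : (2:ℝ) ^ ((N:ℝ) + t) ≤ 2 ^ (N + 1) := by
            rw [← Real.rpow_natCast 2 (N + 1)]
            apply Real.rpow_le_rpow_of_exponent_le (by norm_num)
            push_cast; linarith
          have e3 : R ^ (-((N : ℝ) + t)) * R * R ^ N = ((2:ℝ) ^ (-(1 - t))) ^ j := by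
            have : R ^ (-((N : ℝ) + t)) * R * R ^ N = R ^ (1 - t) := by
              calc _ = R ^ (-((N : ℝ) + t)) * R ^ (1:ℝ) * R ^ (N:ℝ) := by simp
                _ = _ := by
                  rw [← Real.rpow_add hRp, ← Real.rpow_add hRp]; congr 1; ring
            rw [this, hR, one_div, Real.inv_rpow (by positivity), ← Real.rpow_neg (by positivity),
                ← Real.rpow_natCast, ← Real.rpow_mul (by norm_num),
                ← Real.rpow_natCast, ← Real.rpow_mul (by norm_num), mul_comm (j:ℝ)]
          rw [e1]
          calc _ = 2 ^ ((N:ℝ) + t) * L * om N * (R ^ (-((N : ℝ) + t)) * R * R ^ N) := by ring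
            _ ≤ _ := by rw [e3]; gcongr
  have far : ∫⁻ h in {h | (1:ℝ) ≤ ‖h‖}, krn N t h * DD N (Metric.ball 0 ρ) h ≤
      ENNReal.ofReal (2 ^ (N + 1) * om N / δ * (om N * ρ ^ N)) := by
    calc _ ≤ ∫⁻ h in {h | (1:ℝ) ≤ ‖h‖}, krn N t h * volume (Metric.ball (0 : EuclideanSpace ℝ (Fin N)) ρ) := by
          gcongr; exact DD_le _ _
      _ = (∫⁻ h in {h | (1:ℝ) ≤ ‖h‖}, krn N t h) * volume (Metric.ball (0 : EuclideanSpace ℝ (Fin N)) ρ) :=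
          lintegral_mul_const _ (krn_meas N t)
      _ ≤ ENNReal.ofReal (2 ^ (N + 1) * om N / t * 1 ^ (-t)) * ENNReal.ofReal (om N * ρ ^ N) := by
          rw [vol_ball _ hρ]; gcongr; exact tail ht0 ht1.le one_pos
      _ ≤ _ := by
          rw [Real.one_rpow, mul_one, ← ENNReal.ofReal_mul (by positivity)]
          apply ENNReal.ofReal_le_ofReal
          gcongr
  have tot : fracPer N t (Metric.ball 0 ρ) ≤
      ENNReal.ofReal (2 ^ (N + 1) * L * om N * (2 / (1 - t))) +
      ENNReal.ofReal (2 ^ (N + 1) * om N / δ * (om N * ρ ^ N)) := by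
    rw [fracPer_eq hA]
    refine (lint_near_far _ (by simp [krn_zero ht0]) 1).trans (add_le_add ?_ far)
    refine (ENNReal.tsum_le_tsum near).trans ?_
    rw [ENNReal.tsum_mul_left, geo (by positivity) hq1, ← ENNReal.ofReal_mul (by positivity)]
    apply ENNReal.ofReal_le_ofReal
    have := two_rpow_bound2 (x := 1 - t) (by linarith) (by linarith)
    have h1t : 0 < 1 - t := by linarith
    gcongr
    rw [← inv_div]; gcongr
  have h1t : 0 < 1 - t := by linarith
  calc _ ≤ ENNReal.ofReal (1 - t) * _ := mul_le_mul_right tot _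
    _ = ENNReal.ofReal (2 ^ (N + 1) * L * om N * 2) + ENNReal.ofReal ((1 - t) * (2 ^ (N + 1) * om N / δ * (om N * ρ ^ N))) := by
        rw [mul_add, ← ENNReal.ofReal_mul h1t.le, ← ENNReal.ofReal_mul h1t.le]
        congr 2; field_simp
    _ ≤ _ := by
        rw [ENNReal.ofReal_add (by positivity) (by positivity)]
        have : 0 < (2 ^ (N + 1) * om N / δ * (om N * ρ ^ N)) := by positivity
        gcongr _ + ENNReal.ofReal ?_
        exact mul_le_of_le_one_left this.le (by linarith)

lemma per_smul {N : ℕ} {A : Set (EuclideanSpace ℝ (Fin N))} (hA : MeasurableSet A) (α : ℝ) {c : ℝ}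
    (hc : 0 < c) : fracPer N α ((fun x => c⁻¹ • x) ⁻¹' A) =
      ENNReal.ofReal (c ^ ((N:ℝ) - α)) * fracPer N α A := by
  have hB : MeasurableSet ((fun x : EuclideanSpace ℝ (Fin N) => c⁻¹ • x) ⁻¹' A) := hA.preimage (by fun_prop)
  have mB : Measurable fun h => krn N α h * DD N ((fun x => c⁻¹ • x) ⁻¹' A) h :=
    (krn_meas N α).mul (DD_meas hB)
  have mA : Measurable fun h => krn N α h * DD N A h := (krn_meas N α).mul (DD_meas hA)
  have hD : ∀ h, DD N ((fun x => c⁻¹ • x) ⁻¹' A) (c • h) = ENNReal.ofReal (c ^ N) * DD N A h := by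
    intro h
    have : ((fun x => c⁻¹ • x) ⁻¹' A) ∩ (fun x => x + c • h) ⁻¹' ((fun x => c⁻¹ • x) ⁻¹' A)ᶜ =
      (fun x => c⁻¹ • x) ⁻¹' (A ∩ (fun x => x + h) ⁻¹' Aᶜ) := by
      ext x; simp [smul_add, smul_smul, hc.ne']
    unfold DD
    rw [this, Measure.addHaar_preimage_smul _ (inv_ne_zero hc.ne'), finrank_euclideanSpace, Fintype.card_fin]
    congr 2
    rw [abs_of_pos (by positivity)]; simp
  rw [fracPer_eq hB, fracPer_eq hA, lint_smul hc _ mB, ← lintegral_const_mul _ mA]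
  rw [← lintegral_const_mul _ (by exact mB.comp (by fun_prop))]
  refine lintegral_congr fun h => ?_
  rw [hD, krn_smul hc]
  have : ENNReal.ofReal (c ^ N) * ENNReal.ofReal (c ^ (-((N : ℝ) + α))) * ENNReal.ofReal (c ^ N)
      = ENNReal.ofReal (c ^ ((N:ℝ) - α)) := by
    rw [← ENNReal.ofReal_mul (by positivity), ← ENNReal.ofReal_mul (by positivity)]
    congr 1
    rw [← Real.rpow_natCast, ← Real.rpow_add hc, ← Real.rpow_add hc]
    congr 1; ring
  rw [← this]; ring

lemma ie_meas (N : ℕ) (α : ℝ) : Measurable (Function.uncurry fun x y : EuclideanSpace ℝ (Fin N) =>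
    ENNReal.ofReal (‖x - y‖ ^ (-((N : ℝ) + α)))) := by
  unfold Function.uncurry; fun_prop

lemma ie_symm {N : ℕ} (α : ℝ) (A B : Set (EuclideanSpace ℝ (Fin N))) :
    interEnergy N α A B = interEnergy N α B A := by
  unfold interEnergy
  rw [lintegral_lintegral_swap (ie_meas N α).aemeasurable]
  simp_rw [norm_sub_rev]

lemma ie_union_left {N : ℕ} (α : ℝ) {A B : Set (EuclideanSpace ℝ (Fin N))} (C)
    (hB : MeasurableSet B) (h : Disjoint A B) :
    interEnergy N α (A ∪ B) C = interEnergy N α A C + interEnergy N α B C :=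
  lintegral_union hB h

lemma ie_union_right {N : ℕ} (α : ℝ) {A B : Set (EuclideanSpace ℝ (Fin N))} (C)
    (hB : MeasurableSet B) (h : Disjoint A B) :
    interEnergy N α C (A ∪ B) = interEnergy N α C A + interEnergy N α C B := by
  rw [ie_symm, ie_union_left α C hB h, ie_symm, ie_symm α B]

lemma per_decomp {N : ℕ} (α : ℝ) {F B : Set (EuclideanSpace ℝ (Fin N))} (hF : MeasurableSet F)
    (hB : MeasurableSet B) :
    fracPer N α F = interEnergy N α (F \ B) Fᶜ + interEnergy N α (F ∩ B) Fᶜ ∧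
    fracPer N α (F \ B) = interEnergy N α (F \ B) Fᶜ + interEnergy N α (F ∩ B) (F \ B) ∧
    fracPer N α (F ∩ B) = interEnergy N α (F ∩ B) Fᶜ + interEnergy N α (F ∩ B) (F \ B) := by
  refine ⟨?_, ?_, ?_⟩
  · rw [← ie_union_left _ _ (hF.inter hB) (Set.disjoint_sdiff_inter), Set.sdiff_union_inter]; rfl
  · have : (F \ B)ᶜ = Fᶜ ∪ (F ∩ B) := by ext x; simp; tauto
    unfold fracPer
    rw [this, ie_union_right _ _ (hF.inter hB), ie_symm _ (F ∩ B)]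
    exact Set.disjoint_left.2 fun x h1 h2 => h1 h2.1
  · have : (F ∩ B)ᶜ = Fᶜ ∪ (F \ B) := by ext x; simp; tauto
    unfold fracPer
    rw [this, ie_union_right _ _ (hF.diff hB)]
    exact Set.disjoint_left.2 fun x h1 h2 => h1 h2.1


def Interp (N : ℕ) (δ K : ℝ) : Prop :=
    ∀ s t : ℝ, 0 < s → t < 1 → δ ≤ t - s → ∀ A : Set (EuclideanSpace ℝ (Fin N)),
      MeasurableSet A → ENNReal.ofReal s * fracPer N s A ≤
        ENNReal.ofReal (1 / 4) * (ENNReal.ofReal (1 - t) * fracPer N t A) +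
          ENNReal.ofReal K * volume A

lemma interp_real {N : ℕ} {δ K : ℝ} (hK : 0 < K) (hI : Interp N δ K) {s t v : ℝ} (hs : 0 < s)
    (ht : t < 1) (hst : δ ≤ t - s) {A : Set (EuclideanSpace ℝ (Fin N))} (hA : MeasurableSet A)
    (hv : 0 ≤ v) (hvA : volume A = ENNReal.ofReal v) (hfin : fracPer N t A ≠ ⊤) :
    fracPer N s A ≠ ⊤ ∧ s * (fracPer N s A).toReal ≤
      1 / 4 * ((1 - t) * (fracPer N t A).toReal) + K * v := by
  have h := hI s t hs ht hst A hA
  rw [hvA] at h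
  have h1t : 0 < 1 - t := by linarith
  have hf : fracPer N t A = ENNReal.ofReal (fracPer N t A).toReal := (ENNReal.ofReal_toReal hfin).symm
  set p := (fracPer N t A).toReal with hp
  have hp0 : 0 ≤ p := ENNReal.toReal_nonneg
  rw [hf, ← ENNReal.ofReal_mul h1t.le, ← ENNReal.ofReal_mul (by norm_num), ← ENNReal.ofReal_mul hK.le,
    ← ENNReal.ofReal_add (by positivity) (by positivity)] at h
  have hsf : fracPer N s A ≠ ⊤ := by
    intro htop
    rw [htop, ENNReal.mul_top (by simpa using hs)] at h
    exact absurd h (by simp)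
  refine ⟨hsf, ?_⟩
  rw [← ENNReal.ofReal_toReal hsf, ← ENNReal.ofReal_mul hs.le] at h
  rwa [ENNReal.ofReal_le_ofReal_iff (by positivity)] at h

lemma min_bound {N : ℕ} (hN : 0 < N) {δ K m : ℝ} (hδ : 0 < δ) (hK : 0 < K) (hI : Interp N δ K)
    (hm : 0 < m) : ∃ C : ℝ, 0 < C ∧ ∀ s t : ℝ, 0 < s → t < 1 → δ ≤ t - s →
      ∀ F, IsMinimizer N s t m F → (1 - t) * (fracPer N t F).toReal ≤ C := by
  have hom := om_pos N
  have hNr : (0:ℝ) < N := by exact_mod_cast hN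
  set ρ := (m / om N) ^ (1 / (N:ℝ)) with hρd
  have hρ : 0 < ρ := by positivity
  have hρN : ρ ^ N = m / om N := by
    rw [hρd, ← Real.rpow_natCast, ← Real.rpow_mul (by positivity), one_div_mul_cancel hNr.ne', Real.rpow_one]
  obtain ⟨Cb, hCb, hball⟩ := ball_per N hδ hρ
  refine ⟨4 / 3 * (Cb + K * m), by positivity, fun s t hs ht hst F hF => ?_⟩
  obtain ⟨hFm, hFv, hFf, hFmin⟩ := hF
  have h1t : 0 < 1 - t := by linarith
  have hb := hball t (by linarith) ht
  have hvolb : volume (Metric.ball (0 : EuclideanSpace ℝ (Fin N)) ρ) = ENNReal.ofReal m := by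
    rw [vol_ball _ hρ, hρN]; congr 1; field_simp
  have hbf : fracPer N t (Metric.ball 0 ρ) ≠ ⊤ := by
    intro htop
    rw [htop, ENNReal.mul_top (by simpa using ht)] at hb
    exact absurd hb (by simp)
  have hmin := hFmin _ measurableSet_ball hvolb hbf.lt_top
  have hbr : (1 - t) * (fracPer N t (Metric.ball 0 ρ)).toReal ≤ Cb := by
    rw [← ENNReal.ofReal_toReal hbf, ← ENNReal.ofReal_mul h1t.le,
      ENNReal.ofReal_le_ofReal_iff hCb.le] at hb
    exact hb
  obtain ⟨_, h2⟩ := interp_real hK hI hs ht hst hFm hm.le hFv hFf.ne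
  unfold freeEnergy at hmin
  have : 0 ≤ s * (fracPer N s (Metric.ball 0 ρ)).toReal := by positivity
  linarith

lemma main_ineq {N : ℕ} (hN : 0 < N) {δ K m Cm : ℝ} (hδ : 0 < δ) (hK : 0 < K) (hI : Interp N δ K)
    (hm : 0 < m) (hCm : 0 < Cm) {s t : ℝ} (hs : 0 < s) (ht : t < 1) (hst : δ ≤ t - s)
    {F B : Set (EuclideanSpace ℝ (Fin N))} (hF : IsMinimizer N s t m F)
    (hFC : (1 - t) * (fracPer N t F).toReal ≤ Cm) (hB : MeasurableSet B) {v : ℝ} (hv : 0 ≤ v)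
    (hvm : v ≤ m / 2) (hvB : volume (F ∩ B) = ENNReal.ofReal v) :
    ENNReal.ofReal (1 - t) * fracPer N t (F ∩ B) ≤
      ENNReal.ofReal 4 * (ENNReal.ofReal (1 - t) * interEnergy N t (F ∩ B) (F \ B)) +
      ENNReal.ofReal (4 / 3 * (K + 2 * Cm / m) * v) := by
  obtain ⟨hFm, hFv, hFf, hFmin⟩ := hF
  have h1t : 0 < 1 - t := by linarith
  have hNr : (0:ℝ) < N := by exact_mod_cast hN
  have hNr1 : (1:ℝ) ≤ N := by exact_mod_cast hN
  by_cases hIt : interEnergy N t (F ∩ B) (F \ B) = ⊤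
  · rw [hIt, ENNReal.mul_top (by simpa using ht), ENNReal.mul_top (by simp)]
    simp
  have hEm : MeasurableSet (F \ B) := hFm.diff hB
  have hAm : MeasurableSet (F ∩ B) := hFm.inter hB
  obtain ⟨d1, d2, d3⟩ := per_decomp t hFm hB
  obtain ⟨g1, g2, g3⟩ := per_decomp s hFm hB
  have hEv : volume (F \ B) = ENNReal.ofReal (m - v) := by
    have := measure_sdiff_add_inter (μ := volume) F hB
    rw [ENNReal.ofReal_sub _ hv, ← hFv, ← hvB, ← this]
    rw [ENNReal.add_sub_cancel_right]
    rw [hvB]; simp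
  have f1 : interEnergy N t (F \ B) Fᶜ ≠ ⊤ := ne_top_of_le_ne_top hFf.ne (by rw [d1]; exact le_self_add)
  have f2 : interEnergy N t (F ∩ B) Fᶜ ≠ ⊤ := ne_top_of_le_ne_top hFf.ne (by rw [d1]; exact le_add_self)
  have hPE : fracPer N t (F \ B) ≠ ⊤ := by rw [d2]; exact ENNReal.add_ne_top.2 ⟨f1, hIt⟩
  have hPA : fracPer N t (F ∩ B) ≠ ⊤ := by rw [d3]; exact ENNReal.add_ne_top.2 ⟨f2, hIt⟩
  obtain ⟨hFs, _⟩ := interp_real hK hI hs ht hst hFm hm.le hFv hFf.ne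
  obtain ⟨hEs, _⟩ := interp_real hK hI hs ht hst hEm (by linarith) hEv hPE
  obtain ⟨hAs, hAint⟩ := interp_real hK hI hs ht hst hAm hv hvB hPA
  have f1s : interEnergy N s (F \ B) Fᶜ ≠ ⊤ := ne_top_of_le_ne_top hFs (by rw [g1]; exact le_self_add)
  have f2s : interEnergy N s (F ∩ B) Fᶜ ≠ ⊤ := ne_top_of_le_ne_top hFs (by rw [g1]; exact le_add_self)
  have f3s : interEnergy N s (F ∩ B) (F \ B) ≠ ⊤ := ne_top_of_le_ne_top hEs (by rw [g2]; exact le_add_self)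
  -- the competitor
  have hmv : 0 < m - v := by linarith
  set c := (m / (m - v)) ^ (1 / (N:ℝ)) with hcd
  have hc : 0 < c := by positivity
  have hc1 : 1 ≤ c := Real.one_le_rpow (by rw [one_le_div hmv]; linarith) (by positivity)
  have hcN : c ^ (N:ℝ) = m / (m - v) := by
    rw [hcd, ← Real.rpow_mul (by positivity), one_div_mul_cancel hNr.ne', Real.rpow_one]
  have hGm : MeasurableSet ((fun x : EuclideanSpace ℝ (Fin N) => c⁻¹ • x) ⁻¹' (F \ B)) :=
    hEm.preimage (by fun_prop)
  have hGv : volume ((fun x : EuclideanSpace ℝ (Fin N) => c⁻¹ • x) ⁻¹' (F \ B)) = ENNReal.ofReal m := by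
    rw [Measure.addHaar_preimage_smul _ (inv_ne_zero hc.ne'), finrank_euclideanSpace, Fintype.card_fin,
      hEv, ← ENNReal.ofReal_mul (by positivity), abs_of_pos (by positivity), inv_pow, inv_inv,
      ← Real.rpow_natCast, hcN]
    congr 1; field_simp
  have hGt := per_smul hEm t hc
  have hGs := per_smul hEm s hc
  have hmin := hFmin _ hGm hGv (by rw [hGt]; exact ENNReal.mul_lt_top (by simp) hPE.lt_top)
  unfold freeEnergy at hmin
  rw [hGt, hGs, ENNReal.toReal_mul, ENNReal.toReal_mul, ENNReal.toReal_ofReal (by positivity),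
    ENNReal.toReal_ofReal (by positivity)] at hmin
  have hcs : 1 ≤ c ^ ((N:ℝ) - s) := Real.one_le_rpow hc1 (by linarith)
  have hct : c ^ ((N:ℝ) - t) ≤ 1 + 2 * v / m := by
    calc _ ≤ c ^ (N:ℝ) := Real.rpow_le_rpow_of_exponent_le hc1 (by linarith)
      _ = m / (m - v) := hcN
      _ ≤ _ := by
        rw [div_le_iff₀ hmv]
        have : (1 + 2 * v / m) * (m - v) = m + v * (m - 2 * v) / m := by field_simp; ring
        rw [this]
        have : 0 ≤ v * (m - 2 * v) / m := div_nonneg (mul_nonneg hv (by linarith)) hm.le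
        linarith
  -- real variables
  have rF : (fracPer N t F).toReal = (interEnergy N t (F \ B) Fᶜ).toReal + (interEnergy N t (F ∩ B) Fᶜ).toReal := by
    rw [d1, ENNReal.toReal_add f1 f2]
  have rE : (fracPer N t (F \ B)).toReal = (interEnergy N t (F \ B) Fᶜ).toReal + (interEnergy N t (F ∩ B) (F \ B)).toReal := by
    rw [d2, ENNReal.toReal_add f1 hIt]
  have rA : (fracPer N t (F ∩ B)).toReal = (interEnergy N t (F ∩ B) Fᶜ).toReal + (interEnergy N t (F ∩ B) (F \ B)).toReal := by
    rw [d3, ENNReal.toReal_add f2 hIt]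
  have sF : (fracPer N s F).toReal = (interEnergy N s (F \ B) Fᶜ).toReal + (interEnergy N s (F ∩ B) Fᶜ).toReal := by
    rw [g1, ENNReal.toReal_add f1s f2s]
  have sE : (fracPer N s (F \ B)).toReal = (interEnergy N s (F \ B) Fᶜ).toReal + (interEnergy N s (F ∩ B) (F \ B)).toReal := by
    rw [g2, ENNReal.toReal_add f1s f3s]
  have sA : (fracPer N s (F ∩ B)).toReal = (interEnergy N s (F ∩ B) Fᶜ).toReal + (interEnergy N s (F ∩ B) (F \ B)).toReal := by
    rw [g3, ENNReal.toReal_add f2s f3s]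
  rw [← ENNReal.ofReal_toReal hPA, ← ENNReal.ofReal_toReal hIt, ← ENNReal.ofReal_mul h1t.le,
    ← ENNReal.ofReal_mul h1t.le, ← ENNReal.ofReal_mul (by norm_num), ← ENNReal.ofReal_add
    (by positivity) (by positivity)]
  apply ENNReal.ofReal_le_ofReal
  rw [rF] at hFC hmin
  rw [rA, sA] at hAint
  rw [sF, rE, sE] at hmin
  rw [rA]
  generalize (interEnergy N t (F \ B) Fᶜ).toReal = p0 at *
  have hIE : 0 ≤ (interEnergy N t (F ∩ B) (F \ B)).toReal := ENNReal.toReal_nonneg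
  have hIA : 0 ≤ (interEnergy N t (F ∩ B) Fᶜ).toReal := ENNReal.toReal_nonneg
  have hIEs : 0 ≤ (interEnergy N s (F ∩ B) (F \ B)).toReal := ENNReal.toReal_nonneg
  have hIs0 : 0 ≤ (interEnergy N s (F \ B) Fᶜ).toReal := ENNReal.toReal_nonneg
  generalize (interEnergy N t (F ∩ B) (F \ B)).toReal = pE at *
  generalize (interEnergy N t (F ∩ B) Fᶜ).toReal = pA at *
  generalize (interEnergy N s (F ∩ B) (F \ B)).toReal = qE at *
  generalize (interEnergy N s (F \ B) Fᶜ).toReal = q0 at *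
  generalize (interEnergy N s (F ∩ B) Fᶜ).toReal = qA at *
  have w1 : s * (q0 + qE) ≤ s * (c ^ ((N:ℝ) - s) * (q0 + qE)) := by
    gcongr
    exact le_mul_of_one_le_left (by positivity) hcs
  have hp0 : 0 ≤ p0 + pE := by rw [← rE]; exact ENNReal.toReal_nonneg
  have w2 : (1 - t) * (c ^ ((N:ℝ) - t) * (p0 + pE)) ≤ (1 - t) * ((1 + 2 * v / m) * (p0 + pE)) := by
    gcongr
  have hvm1 : 2 * v / m ≤ 1 := by rw [div_le_one hm]; linarith
  have hvm0 : 0 ≤ 2 * v / m := by positivity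
  have w3 : 2 * v / m * ((1 - t) * (p0 + pE)) ≤ 2 * v / m * Cm + (1 - t) * pE := by
    have a1 : 2 * v / m * ((1 - t) * p0) ≤ 2 * v / m * Cm := by
      gcongr
      nlinarith
    have a2 : 2 * v / m * ((1 - t) * pE) ≤ (1 - t) * pE :=
      mul_le_of_le_one_left (by positivity) hvm1
    linarith
  have w4 : 2 * v / m * Cm = 2 * Cm / m * v := by ring
  have w5 : 0 ≤ s * qE := by positivity
  nlinarith


lemma iter {N : ℕ} (hN : 0 < N) {δ M : ℝ} (hδ : 0 < δ) (hM : 0 < M) : ∃ c₀ : ℝ, 0 < c₀ ∧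
    ∀ t : ℝ, δ ≤ t → t < 1 → ∀ r : ℝ, 0 < r → ∀ u : ℝ → ℝ, (∀ x, 0 ≤ u x) → Monotone u →
      (∀ a b, 0 < a → a < b → b ≤ r → (b - a) * u a ^ (1 - t / N) ≤ M * b ^ (1 - t) * u b) →
      0 < u (r / 2) → c₀ * r ^ N ≤ u r := by
  have hNr : (0:ℝ) < N := by exact_mod_cast hN
  have hNr1 : (1:ℝ) ≤ N := by exact_mod_cast hN
  set μ : ℝ := (2:ℝ) ^ (-(N / δ)) with hμ
  have hμ0 : 0 < μ := by positivity
  have hμ1 : μ < 1 := Real.rpow_lt_one_of_one_lt_of_neg (by norm_num) (by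
    have : 0 < N / δ := by positivity
    linarith)
  set e := min 1 (μ / (4 * M)) with he
  have he0 : 0 < e := by positivity
  have he1 : e ≤ 1 := min_le_left _ _
  set c := e ^ (N / δ) with hc
  have hc0 : 0 < c := by positivity
  have hc1 : c ≤ 1 := Real.rpow_le_one he0.le he1 (by positivity)
  refine ⟨c, hc0, fun t hδt ht r hr u hu0 hum hdec hpos => ?_⟩
  by_contra! hcon
  set γ := t / N with hγ
  have hγδ : δ / N ≤ γ := by rw [hγ]; gcongr
  have hγ1 : γ < 1 := by rw [hγ, div_lt_one hNr]; linarith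
  have hcγ : 4 * M * c ^ γ ≤ μ := by
    have : c ^ γ ≤ μ / (4 * M) := by
      calc c ^ γ ≤ c ^ (δ / N) := Real.rpow_le_rpow_of_exponent_ge hc0 hc1 hγδ
        _ = e := by
          rw [hc, ← Real.rpow_mul he0.le]
          have : (N / δ) * (δ / N) = 1 := by field_simp
          rw [this, Real.rpow_one]
        _ ≤ _ := min_le_right _ _
    rw [le_div_iff₀ (by positivity)] at this
    linarith
  have hμγ : μ ^ γ ≤ 1 / 2 := by
    calc μ ^ γ ≤ μ ^ (δ / N) := Real.rpow_le_rpow_of_exponent_ge hμ0 hμ1.le hγδ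
      _ = 1 / 2 := by
        rw [hμ, ← Real.rpow_mul (by norm_num)]
        have : -(N / δ) * (δ / N) = -1 := by field_simp
        rw [this, Real.rpow_neg_one]; norm_num
  set l : ℕ → ℝ := fun k => r / 2 * (1 + 1 / 2 ^ k) with hl
  have hind : ∀ k : ℕ, u (l k) ≤ c * μ ^ k * r ^ N := by
    intro k
    induction k with
    | zero =>
      have : l 0 = r := by simp only [hl]; norm_num
      rw [this]; simpa using hcon.le
    | succ k ih =>
      have hla : 0 < l (k + 1) := by simp only [hl]; positivity
      have hdiff : l k - l (k + 1) = r / (4 * 2 ^ k) := by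
        simp only [hl, pow_succ]; field_simp; ring
      have hlt : l (k + 1) < l k := by
        have : 0 < r / (4 * 2 ^ k) := by positivity
        linarith
      have hlr : l k ≤ r := by
        have : 1 / (2:ℝ) ^ k ≤ 1 := by
          rw [div_le_one (by positivity)]; exact one_le_pow₀ (by norm_num)
        simp only [hl]; nlinarith
      have h1 := hdec _ _ hla hlt hlr
      rw [hdiff] at h1
      have hlk : 0 < l k := hla.trans hlt
      have h2 : M * l k ^ (1 - t) * u (l k) ≤ M * r ^ (1 - t) * (c * μ ^ k * r ^ N) := by
        have := hu0 (l k)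
        gcongr
      have h3 : u (l (k + 1)) ^ (1 - γ) ≤ 4 * M * 2 ^ k * μ ^ k * c * r ^ ((N:ℝ) - t) := by
        have h4 := h1.trans h2
        have e1 : r ^ (1 - t) * r ^ N = r * r ^ ((N:ℝ) - t) := by
          nth_rw 3 [← Real.rpow_one r]
          rw [← Real.rpow_natCast, ← Real.rpow_add hr, ← Real.rpow_add hr]; congr 1; ring
        rw [div_mul_eq_mul_div, div_le_iff₀ (by positivity)] at h4
        have h5 : r * u (l (k + 1)) ^ (1 - γ) ≤ r * (4 * M * 2 ^ k * μ ^ k * c * r ^ ((N:ℝ) - t)) := by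
          calc _ ≤ _ := h4
            _ = (r ^ (1 - t) * r ^ N) * (4 * M * 2 ^ k * μ ^ k * c) := by ring
            _ = _ := by rw [e1]; ring
        exact le_of_mul_le_mul_left h5 hr
      have h6 : 4 * M * 2 ^ k * μ ^ k * c * r ^ ((N:ℝ) - t) ≤ (c * μ ^ (k + 1) * r ^ N) ^ (1 - γ) := by
        have e2 : (c * μ ^ (k + 1) * r ^ N) ^ (1 - γ) =
            c ^ (1 - γ) * (μ ^ (k + 1)) ^ (1 - γ) * r ^ ((N:ℝ) - t) := by
          rw [Real.mul_rpow (by positivity) (by positivity), Real.mul_rpow hc0.le (by positivity)]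
          congr 1
          rw [← Real.rpow_natCast r N, ← Real.rpow_mul hr.le]
          congr 1
          rw [hγ]; field_simp
        have e3 : c = c ^ (1 - γ) * c ^ γ := by
          rw [← Real.rpow_add hc0]; simp
        have e4 : μ ^ (k + 1) * 2 ^ (k + 1) ≤ (μ ^ (k + 1)) ^ (1 - γ) := by
          have e5 : μ ^ (k + 1) = (μ ^ (k + 1)) ^ (1 - γ) * (μ ^ (k + 1)) ^ γ := by
            rw [← Real.rpow_add (by positivity)]; simp
          have e6 : (μ ^ (k + 1)) ^ γ * 2 ^ (k + 1) ≤ 1 := by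
            have : (μ ^ (k + 1)) ^ γ = (μ ^ γ) ^ (k + 1) := by
              rw [← Real.rpow_natCast, ← Real.rpow_mul hμ0.le, mul_comm, Real.rpow_mul hμ0.le,
                Real.rpow_natCast]
            rw [this, ← mul_pow]
            apply pow_le_one₀ (by positivity)
            linarith
          calc μ ^ (k + 1) * 2 ^ (k + 1) = (μ ^ (k + 1)) ^ (1 - γ) * ((μ ^ (k + 1)) ^ γ * 2 ^ (k + 1)) := by
                rw [← mul_assoc, ← e5]
            _ ≤ _ := mul_le_of_le_one_right (by positivity) e6
        rw [e2]
        refine mul_le_mul_of_nonneg_right ?_ (by positivity)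
        calc 4 * M * 2 ^ k * μ ^ k * c = c ^ (1 - γ) * ((4 * M * c ^ γ) * (2 ^ k * μ ^ k)) := by
              nth_rw 1 [e3]; ring
          _ ≤ c ^ (1 - γ) * (μ * (2 ^ k * μ ^ k)) := by gcongr
          _ ≤ c ^ (1 - γ) * (μ ^ (k + 1) * 2 ^ (k + 1)) := by
              refine mul_le_mul_of_nonneg_left ?_ (by positivity)
              have : 0 < μ ^ k * μ * 2 ^ k := by positivity
              rw [pow_succ, pow_succ]; nlinarith
          _ ≤ _ := mul_le_mul_of_nonneg_left e4 (by positivity)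
      exact (Real.rpow_le_rpow_iff (hu0 _) (by positivity) (by linarith)).1 (h3.trans h6)
  have hle : ∀ k : ℕ, u (r / 2) ≤ c * μ ^ k * r ^ N := by
    intro k
    refine (hum ?_).trans (hind k)
    have : 0 < 1 / (2:ℝ) ^ k := by positivity
    simp only [hl]; nlinarith
  have hlim : Filter.Tendsto (fun k : ℕ => c * μ ^ k * r ^ N) Filter.atTop (nhds 0) := by
    have := ((tendsto_pow_atTop_nhds_zero_of_lt_one hμ0.le hμ1).const_mul c).mul_const (r ^ N)
    simpa using this
  have := ge_of_tendsto' hlim hle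
  linarith

lemma ie_ball {N : ℕ} {t δ r : ℝ} (hδ : 0 < δ) (hδt : δ ≤ t) (ht : t < 1)
    (x₀ : EuclideanSpace ℝ (Fin N)) {F : Set (EuclideanSpace ℝ (Fin N))} (hF : MeasurableSet F) :
    interEnergy N t (F ∩ Metric.ball x₀ r) (F \ Metric.ball x₀ r) ≤
      ENNReal.ofReal (2 ^ (N + 1) * om N / δ) *
        ∫⁻ x in F ∩ Metric.ball x₀ r, ENNReal.ofReal ((r - dist x x₀) ^ (-t)) := by
  have hom := om_pos N
  have ht0 : 0 < t := by linarith
  rw [← lintegral_const_mul _ (by fun_prop)]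
  unfold interEnergy
  refine setLIntegral_mono' (hF.inter measurableSet_ball) fun x hx => ?_
  have hd : 0 < r - dist x x₀ := by have := hx.2; simp only [Metric.mem_ball] at this; linarith
  calc _ ≤ ∫⁻ y in (fun y => -x + y) ⁻¹' {h | r - dist x x₀ ≤ ‖h‖}, krn N t (-x + y) := by
        have : ∀ y, ENNReal.ofReal (‖x - y‖ ^ (-((N : ℝ) + t))) = krn N t (-x + y) := by
          intro y; rw [krn, neg_add_eq_sub, norm_sub_rev]
        simp_rw [this]
        apply lintegral_mono_set
        rintro y ⟨_, hy⟩
        simp only [Metric.mem_ball, not_lt] at hy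
        simp only [Set.mem_preimage, Set.mem_ofPred_eq, neg_add_eq_sub, ← dist_eq_norm]
        linarith [dist_triangle y x x₀]
    _ = ∫⁻ h in {h | r - dist x x₀ ≤ ‖h‖}, krn N t h := by
        have hm : MeasurableSet {h : EuclideanSpace ℝ (Fin N) | r - dist x x₀ ≤ ‖h‖} :=
          measurableSet_le measurable_const measurable_norm
        rw [← lintegral_indicator hm, ← lintegral_indicator (hm.preimage (by fun_prop)),
          ← lintegral_add_left_eq_self ({h | r - dist x x₀ ≤ ‖h‖}.indicator (krn N t)) (-x)]
        rfl
    _ ≤ _ := tail ht0 ht.le hd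
    _ ≤ _ := by
        rw [← ENNReal.ofReal_mul (by positivity)]
        apply ENNReal.ofReal_le_ofReal
        gcongr

lemma int_1d {t d b : ℝ} (ht : t < 1) (hd : d < b) :
    ENNReal.ofReal (1 - t) * ∫⁻ r in Set.Ioc d b, ENNReal.ofReal ((r - d) ^ (-t)) =
      ENNReal.ofReal ((b - d) ^ (1 - t)) := by
  have h1t : 0 < 1 - t := by linarith
  have hint : IntervalIntegrable (fun r => (r - d) ^ (-t)) volume d b := by
    have := (intervalIntegral.intervalIntegrable_rpow' (a := 0) (b := b - d) (r := -t) (by linarith)).comp_sub_right d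
    simpa using this
  rw [← ofReal_integral_eq_lintegral_ofReal]
  · rw [← ENNReal.ofReal_mul h1t.le, ← intervalIntegral.integral_of_le hd.le,
      intervalIntegral.integral_comp_sub_right (fun x => x ^ (-t)), integral_rpow (Or.inl (by linarith))]
    congr 1
    rw [sub_self, Real.zero_rpow (by linarith), neg_add_eq_sub]
    field_simp; simp
  · exact (intervalIntegrable_iff_integrableOn_Ioc_of_le hd.le).1 hint
  · refine (ae_restrict_iff' measurableSet_Ioc).2 (Filter.Eventually.of_forall fun x hx => ?_)
    have : 0 < x - d := by linarith [hx.1]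
    simp only [Pi.zero_apply]; positivity

lemma int_r {N : ℕ} {t a b κ T : ℝ} (ht : t < 1) (hT : 0 < T) (hab : a < b) (ha : 0 < a)
    (x₀ : EuclideanSpace ℝ (Fin N)) {F : Set (EuclideanSpace ℝ (Fin N))} (hF : MeasurableSet F)
    (h : ∀ r, a < r → r < b → ENNReal.ofReal κ ≤ ENNReal.ofReal T * (ENNReal.ofReal (1 - t) *
      ∫⁻ x in F ∩ Metric.ball x₀ r, ENNReal.ofReal ((r - dist x x₀) ^ (-t)))) :
    ENNReal.ofReal κ * ENNReal.ofReal (b - a) ≤ ENNReal.ofReal T * (ENNReal.ofReal (b ^ (1 - t)) *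
      volume (F ∩ Metric.ball x₀ b)) := by
  set g : ℝ → EuclideanSpace ℝ (Fin N) → ℝ≥0∞ := fun r x =>
    (Set.Ioi (0:ℝ)).indicator (fun z => ENNReal.ofReal (z ^ (-t))) (r - dist x x₀) with hg
  have hgi : Measurable ((Set.Ioi (0:ℝ)).indicator (fun z : ℝ => ENNReal.ofReal (z ^ (-t)))) :=
    Measurable.indicator (by fun_prop) measurableSet_Ioi
  have hgm : Measurable (Function.uncurry g) := by
    exact hgi.comp (by fun_prop)
  have hSm : ∀ r, MeasurableSet (F ∩ Metric.ball x₀ r) := fun r => hF.inter measurableSet_ball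
  calc _ = ∫⁻ r in Set.Ioo a b, ENNReal.ofReal κ := by rw [setLIntegral_const, Real.volume_Ioo]
    _ ≤ ∫⁻ r in Set.Ioo a b, ENNReal.ofReal T * (ENNReal.ofReal (1 - t) *
          ∫⁻ x in F ∩ Metric.ball x₀ b, g r x) := by
        refine setLIntegral_mono' measurableSet_Ioo fun r hr => (h r hr.1 hr.2).trans ?_
        refine mul_le_mul' le_rfl (mul_le_mul' le_rfl ?_)
        calc _ ≤ ∫⁻ x in F ∩ Metric.ball x₀ r, g r x := by
              refine setLIntegral_mono' (hSm r) fun x hx => ?_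
              have : 0 < r - dist x x₀ := by have := hx.2; simp only [Metric.mem_ball] at this; linarith
              have h1 : r - dist x x₀ ∈ Set.Ioi (0:ℝ) := this
              simp only [hg]
              rw [Set.indicator_of_mem h1]
          _ ≤ _ := lintegral_mono_set (Set.inter_subset_inter_right _ (Metric.ball_subset_ball hr.2.le))
    _ = ENNReal.ofReal T * (ENNReal.ofReal (1 - t) *
          ∫⁻ r in Set.Ioo a b, ∫⁻ x in F ∩ Metric.ball x₀ b, g r x) := by
        rw [lintegral_const_mul' _ _ (by simp), lintegral_const_mul' _ _ (by simp)]
    _ = ENNReal.ofReal T * ∫⁻ x in F ∩ Metric.ball x₀ b, ENNReal.ofReal (1 - t) *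
          ∫⁻ r in Set.Ioo a b, g r x := by
        rw [lintegral_lintegral_swap hgm.aemeasurable, lintegral_const_mul' _ _ (by simp)]
    _ ≤ ENNReal.ofReal T * ∫⁻ x in F ∩ Metric.ball x₀ b, ENNReal.ofReal (b ^ (1 - t)) := by
        refine mul_le_mul' le_rfl ?_
        refine setLIntegral_mono' (hSm b) fun x hx => ?_
        have hd : dist x x₀ < b := hx.2
        calc _ ≤ ENNReal.ofReal (1 - t) *
              ∫⁻ r in Set.Ioc (dist x x₀) b, ENNReal.ofReal ((r - dist x x₀) ^ (-t)) := by
              refine mul_le_mul' le_rfl ?_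
              rw [← lintegral_indicator measurableSet_Ioo, ← lintegral_indicator measurableSet_Ioc]
              refine lintegral_mono fun r => ?_
              by_cases h1 : r ∈ Set.Ioo a b
              · by_cases h2 : dist x x₀ < r
                · have h3 : r ∈ Set.Ioc (dist x x₀) b := ⟨h2, h1.2.le⟩
                  have h4 : r - dist x x₀ ∈ Set.Ioi (0:ℝ) := sub_pos.2 h2
                  rw [Set.indicator_of_mem h1, Set.indicator_of_mem h3]
                  simp only [hg]
                  rw [Set.indicator_of_mem h4]
                · simp [hg, Set.indicator, h2]
              · simp [Set.indicator_of_notMem h1]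
          _ = _ := int_1d ht hd
          _ ≤ _ := by
            apply ENNReal.ofReal_le_ofReal
            have : 0 ≤ dist x x₀ := dist_nonneg
            exact Real.rpow_le_rpow (by linarith) (by linarith) (by linarith)
    _ = _ := by rw [setLIntegral_const]


lemma small_vol {N : ℕ} (hN : 0 < N) {δ c C' r₀ t ρ v : ℝ} (hδ : 0 < δ) (hc : 0 < c) (hC : 0 < C')
    (h1 : r₀ ≤ 1) (h2 : r₀ ≤ (c / (2 * C' * max 1 (om N))) ^ (1 / δ)) (hδt : δ ≤ t) (ht : t < 1)
    (hρ : 0 < ρ) (hρr : ρ < r₀) (hv : 0 < v) (hvρ : v ≤ om N * ρ ^ N) :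
    C' * v ≤ c / 2 * v ^ (1 - t / N) := by
  have hNr : (0:ℝ) < N := by exact_mod_cast hN
  have hNr1 : (1:ℝ) ≤ N := by exact_mod_cast hN
  have ht0 : 0 < t := by linarith
  have hom := om_pos N
  set W := max 1 (om N) with hW
  have hW1 : 1 ≤ W := le_max_left _ _
  have hW0 : 0 < W := by linarith
  have htN : t / N ≤ 1 := by rw [div_le_one hNr]; linarith
  have a1 : v ^ (t / N) ≤ W * ρ ^ δ := by
    calc v ^ (t / N) ≤ (W * ρ ^ N) ^ (t / N) := by
          refine Real.rpow_le_rpow hv.le (hvρ.trans ?_) (by positivity)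
          exact mul_le_mul_of_nonneg_right (le_max_right _ _) (by positivity)
      _ = W ^ (t / N) * ρ ^ t := by
          rw [Real.mul_rpow hW0.le (by positivity), ← Real.rpow_natCast, ← Real.rpow_mul hρ.le]
          congr 2; field_simp
      _ ≤ W ^ (1:ℝ) * ρ ^ δ := by
          refine mul_le_mul (Real.rpow_le_rpow_of_exponent_le hW1 htN)
            (Real.rpow_le_rpow_of_exponent_ge hρ (by linarith) hδt) (by positivity) (by positivity)
      _ = _ := by rw [Real.rpow_one]
  have a2 : ρ ^ δ ≤ c / (2 * C' * W) := by
    calc ρ ^ δ ≤ ((c / (2 * C' * W)) ^ (1 / δ)) ^ δ := 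
          Real.rpow_le_rpow hρ.le (by linarith) hδ.le
      _ = _ := by rw [← Real.rpow_mul (by positivity), one_div_mul_cancel hδ.ne', Real.rpow_one]
  have a3 : C' * v ^ (t / N) ≤ c / 2 := by
    calc C' * v ^ (t / N) ≤ C' * (W * (c / (2 * C' * W))) := by
          refine mul_le_mul_of_nonneg_left (a1.trans ?_) hC.le
          exact mul_le_mul_of_nonneg_left a2 hW0.le
      _ = _ := by field_simp
  have a4 : v = v ^ (t / N) * v ^ (1 - t / N) := by
    rw [← Real.rpow_add hv]; simp
  calc C' * v = C' * v ^ (t / N) * v ^ (1 - t / N) := by rw [mul_assoc, ← a4]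
    _ ≤ _ := mul_le_mul_of_nonneg_right a3 (by positivity)

theorem stmt10 (N : ℕ) (hN : 0 < N) (δ₀ : ℝ) (hδ : δ₀ ∈ Set.Ioo (0 : ℝ) 1) :
    ∃ c₀ : ℝ, 0 < c₀ ∧ ∀ m : ℝ, 0 < m → ∃ r₀ : ℝ, 0 < r₀ ∧
      ∀ s t : ℝ, 0 < s → s < t → t < 1 → δ₀ ≤ t - s →
        ∀ F : Set (EuclideanSpace ℝ (Fin N)), IsMinimizer N s t m F →
          ∀ x₀ ∈ mtBoundary N F, ∀ r : ℝ, 0 < r → r < r₀ →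
            ENNReal.ofReal (c₀ * r ^ N) ≤ volume (Metric.ball x₀ r ∩ F) := by
  have hom := om_pos N
  have hNr : (0:ℝ) < N := by exact_mod_cast hN
  have hNr1 : (1:ℝ) ≤ N := by exact_mod_cast hN
  have hδ0 := hδ.1
  obtain ⟨K, hK, hI⟩ := interp N hδ0
  change Interp N δ₀ K at hI
  obtain ⟨c, hc, hiso⟩ := isop hN
  set T := 2 ^ (N + 1) * om N / δ₀ with hT
  have hT0 : 0 < T := by positivity
  have hM : 0 < 8 * T / c := by positivity
  obtain ⟨c₀, hc₀, hit⟩ := iter hN hδ0 hM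
  refine ⟨c₀, hc₀, fun m hm => ?_⟩
  obtain ⟨Cm, hCm, hmb⟩ := min_bound hN hδ0 hK hI hm
  set C' := 4 / 3 * (K + 2 * Cm / m) with hC'
  have hC0 : 0 < C' := by positivity
  have hW0 : 0 < max 1 (om N) := by positivity
  refine ⟨min (min 1 (m / (2 * om N))) ((c / (2 * C' * max 1 (om N))) ^ (1 / δ₀)), by positivity, ?_⟩
  intro s t hs hst ht hd F hF x₀ hx₀ r hr hrr
  set r₀ := min (min 1 (m / (2 * om N))) ((c / (2 * C' * max 1 (om N))) ^ (1 / δ₀)) with hr₀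
  have b1 : r₀ ≤ 1 := (min_le_left _ _).trans (min_le_left _ _)
  have b2 : r₀ ≤ m / (2 * om N) := (min_le_left _ _).trans (min_le_right _ _)
  have b3 : r₀ ≤ (c / (2 * C' * max 1 (om N))) ^ (1 / δ₀) := min_le_right _ _
  have hδt : δ₀ ≤ t := by linarith
  have ht0 : 0 < t := by linarith
  have h1t : 0 < 1 - t := by linarith
  have hγ : 0 < 1 - t / N := by
    have : t / N < 1 := by rw [div_lt_one hNr]; linarith
    linarith
  have hFm := hF.1
  have hfin : ∀ ρ, volume (F ∩ Metric.ball x₀ ρ) ≠ ⊤ := fun ρ =>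
    ((measure_mono Set.inter_subset_right).trans_lt measure_ball_lt_top).ne
  set u : ℝ → ℝ := fun ρ => (volume (F ∩ Metric.ball x₀ ρ)).toReal with hu
  have hvu : ∀ ρ, volume (F ∩ Metric.ball x₀ ρ) = ENNReal.ofReal (u ρ) := fun ρ =>
    (ENNReal.ofReal_toReal (hfin ρ)).symm
  have hu0 : ∀ ρ, 0 ≤ u ρ := fun ρ => ENNReal.toReal_nonneg
  have hum : Monotone u := fun a b hab => ENNReal.toReal_mono (hfin b)
    (measure_mono (Set.inter_subset_inter_right _ (Metric.ball_subset_ball hab)))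
  have hup : ∀ ρ, 0 < ρ → 0 < u ρ := fun ρ hρ => ENNReal.toReal_pos (hx₀ ρ hρ).1.ne' (hfin ρ)
  have hule : ∀ ρ, 0 < ρ → u ρ ≤ om N * ρ ^ N := by
    intro ρ hρ
    have : ENNReal.ofReal (u ρ) ≤ ENNReal.ofReal (om N * ρ ^ N) := by
      rw [← hvu, ← vol_ball x₀ hρ]; exact measure_mono Set.inter_subset_right
    exact (ENNReal.ofReal_le_ofReal_iff (by positivity)).1 this
  have key : ∀ ρ, 0 < ρ → ρ < r₀ → ENNReal.ofReal (c / 2 * u ρ ^ (1 - t / N)) ≤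
      ENNReal.ofReal (4 * T) * (ENNReal.ofReal (1 - t) *
        ∫⁻ x in F ∩ Metric.ball x₀ ρ, ENNReal.ofReal ((ρ - dist x x₀) ^ (-t))) := by
    intro ρ hρ hρr
    have d0 : u ρ ≤ m / 2 := by
      refine (hule ρ hρ).trans ?_
      have : ρ ^ N ≤ ρ := pow_le_of_le_one hρ.le (by linarith) hN.ne'
      have h2 : ρ ≤ m / (2 * om N) := by linarith
      calc om N * ρ ^ N ≤ om N * (m / (2 * om N)) :=
            mul_le_mul_of_nonneg_left (this.trans h2) hom.le
        _ = m / 2 := by field_simp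
    have d1 := hiso t ht0 ht (F ∩ Metric.ball x₀ ρ) (hFm.inter measurableSet_ball) (u ρ) (hup ρ hρ) (hvu ρ)
    have d2 := main_ineq hN hδ0 hK hI hm hCm hs ht hd hF (hmb s t hs ht hd F hF)
      (measurableSet_ball (x := x₀) (ε := ρ)) (hu0 ρ) d0 (hvu ρ)
    have d3 := ie_ball hδ0 hδt ht x₀ hFm (r := ρ)
    have d4 := small_vol hN hδ0 hc hC0 b1 b3 hδt ht hρ hρr (hup ρ hρ) (hule ρ hρ)
    have d5 : 0 ≤ u ρ ^ (1 - t / N) := Real.rpow_nonneg (hu0 ρ) _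
    have d6 : ENNReal.ofReal (c / 2 * u ρ ^ (1 - t / N)) + ENNReal.ofReal (c / 2 * u ρ ^ (1 - t / N)) ≤
        ENNReal.ofReal (4 * T) * (ENNReal.ofReal (1 - t) *
        ∫⁻ x in F ∩ Metric.ball x₀ ρ, ENNReal.ofReal ((ρ - dist x x₀) ^ (-t))) +
          ENNReal.ofReal (c / 2 * u ρ ^ (1 - t / N)) := by
      rw [← ENNReal.ofReal_add (by positivity) (by positivity)]
      calc _ = ENNReal.ofReal (c * u ρ ^ (1 - t / N)) := by congr 1; ring
        _ ≤ _ := d1.trans d2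
        _ ≤ _ := by
          refine add_le_add ?_ (ENNReal.ofReal_le_ofReal d4)
          calc _ ≤ ENNReal.ofReal 4 * (ENNReal.ofReal (1 - t) * (ENNReal.ofReal T *
                ∫⁻ x in F ∩ Metric.ball x₀ ρ, ENNReal.ofReal ((ρ - dist x x₀) ^ (-t)))) :=
                mul_le_mul' le_rfl (mul_le_mul' le_rfl d3)
            _ = _ := by rw [ENNReal.ofReal_mul (by norm_num : (0:ℝ) ≤ 4)]; ring
    exact (ENNReal.add_le_add_iff_right ENNReal.ofReal_ne_top).1 d6
  have hdec : ∀ a b, 0 < a → a < b → b ≤ r →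
      (b - a) * u a ^ (1 - t / N) ≤ 8 * T / c * b ^ (1 - t) * u b := by
    intro a b ha hab hbr
    have hb : 0 < b := ha.trans hab
    have d5 : 0 ≤ u a ^ (1 - t / N) := Real.rpow_nonneg (hu0 a) _
    have := int_r (κ := c / 2 * u a ^ (1 - t / N)) (T := 4 * T) ht (by positivity) hab ha x₀ hFm
      (fun ρ h1 h2 => by
        refine le_trans (ENNReal.ofReal_le_ofReal ?_) (key ρ (by linarith) (by linarith))
        refine mul_le_mul_of_nonneg_left ?_ (by positivity)
        exact Real.rpow_le_rpow (hu0 a) (hum h1.le) hγ.le)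
    have hub := hu0 b
    rw [hvu, ← ENNReal.ofReal_mul (by positivity), ← ENNReal.ofReal_mul (by positivity),
      ← ENNReal.ofReal_mul (by positivity), ENNReal.ofReal_le_ofReal_iff (by positivity)] at this
    have e : 8 * T / c * b ^ (1 - t) * u b = 2 / c * (4 * T * (b ^ (1 - t) * u b)) := by ring
    rw [e]
    calc (b - a) * u a ^ (1 - t / N) = 2 / c * (c / 2 * u a ^ (1 - t / N) * (b - a)) := by field_simp
      _ ≤ _ := mul_le_mul_of_nonneg_left this (by positivity)
  have := hit t hδt ht r hr u hu0 hum hdec (hup _ (by linarith))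
  rw [Set.inter_comm, hvu]
  exact ENNReal.ofReal_le_ofReal this
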